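/- Suppose (K,L) is stabilizing, P := P_{K,L} is positive definite, E_{K,L} = 0, F_{K,L} = 0, and Rᵛ − CᵀPC is positive definite. Then (K,L) is a Nash equilibrium among stabilizing linear feedback policies: for every K′ such that (K′,L) is stabilizing, C(K,L) ≤ C(K′,L), and for every L′ such that (K,L′) is stabilizing, C(K,L′) ≤ C(K,L). -/

import Mathlib

/-!
The proof compares the two Lyapunov equations. Fix `L`, put `G = A - CL`, `P = P_{K,L}`,
`P' = P_{K',L}`, `M' = G - BK'`. Subtracting the Lyapunov equation of `P` from that of `P'` and
completing the square in `K' - K` gives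

  `(P' - P) - M'ᵀ (P' - P) M' = (K' - K)ᵀ (Rᵘ + BᵀPB) (K' - K)`,

the linear terms vanishing because `E_{K,L} = 0` (`lyapunov_sub_eq`). The right-hand side is positive
semidefinite, so `x ↦ xᵀ(P' - P)x` does not increase along the trajectories of `M'`; as these converge
to `0`, `P' - P` is positive semidefinite (`posSemidef_of_stein`), and so `tr(Σ₀ (P' - P)) ≥ 0`.
For the other player the same identity holds with `-Rᵛ` in place of `Rᵘ`, and
`-Rᵛ + CᵀPC` is negative definite.

The spectral radius condition enters through Gelfand's formula, which gives geometric decay of the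
entries of the powers of a stable matrix, hence convergence of the series defining `P_{K,L}`.
-/

open Matrix

noncomputable section

/-- Spectral radius of a real square matrix: the spectral radius of its complexification. -/
def specRad {n : ℕ} (M : Matrix (Fin n) (Fin n) ℝ) : ENNReal :=
  spectralRadius ℂ (M.map (algebraMap ℝ ℂ))

/-- Spectral (operator 2-) norm of a real matrix. -/
def specNorm {m n : ℕ} (M : Matrix (Fin m) (Fin n) ℝ) : ℝ :=
  ‖LinearMap.toContinuousLinearMap (Matrix.toEuclideanLin M)‖

/-- Smallest (real) eigenvalue of a matrix, as the infimum of its real spectrum. -/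
def lamMin {n : ℕ} (M : Matrix (Fin n) (Fin n) ℝ) : ℝ :=
  sInf (spectrum ℝ M)

/-- The data of a zero-sum LQ game. -/
structure LQ (d m₁ m₂ : ℕ) where
  A : Matrix (Fin d) (Fin d) ℝ
  B : Matrix (Fin d) (Fin m₁) ℝ
  C : Matrix (Fin d) (Fin m₂) ℝ
  Q : Matrix (Fin d) (Fin d) ℝ
  Ru : Matrix (Fin m₁) (Fin m₁) ℝ
  Rv : Matrix (Fin m₂) (Fin m₂) ℝ
  hQ : Q.PosDef
  hRu : Ru.PosDef
  hRv : Rv.PosDef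

namespace LQ

variable {d m₁ m₂ : ℕ} (S : LQ d m₁ m₂)

/-- Closed-loop matrix `A - B*K - C*L`. -/
def cl (K : Matrix (Fin m₁) (Fin d) ℝ) (L : Matrix (Fin m₂) (Fin d) ℝ) :
    Matrix (Fin d) (Fin d) ℝ :=
  S.A - S.B * K - S.C * L

/-- A pair `(K, L)` is stabilizing if `ρ(A - BK - CL) < 1`. -/
def IsStabilizing (K : Matrix (Fin m₁) (Fin d) ℝ) (L : Matrix (Fin m₂) (Fin d) ℝ) : Prop :=
  specRad (S.cl K L) < 1

/-- `P_{K,L} = Σ_{t≥0} ((A-BK-CL)ᵀ)ᵗ (Q + KᵀRᵘK - LᵀRᵛL) (A-BK-CL)ᵗ`. -/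
def P (K : Matrix (Fin m₁) (Fin d) ℝ) (L : Matrix (Fin m₂) (Fin d) ℝ) :
    Matrix (Fin d) (Fin d) ℝ :=
  ∑' t : ℕ, ((S.cl K L)ᵀ) ^ t * (S.Q + Kᵀ * S.Ru * K - Lᵀ * S.Rv * L) * (S.cl K L) ^ t

/-- `Σ_{K,L} = Σ_{t≥0} (A-BK-CL)ᵗ Sig0 ((A-BK-CL)ᵀ)ᵗ`. -/
def Sig (Sig0 : Matrix (Fin d) (Fin d) ℝ) (K : Matrix (Fin m₁) (Fin d) ℝ)
    (L : Matrix (Fin m₂) (Fin d) ℝ) : Matrix (Fin d) (Fin d) ℝ :=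
  ∑' t : ℕ, (S.cl K L) ^ t * Sig0 * ((S.cl K L)ᵀ) ^ t

/-- The cost `C(K,L) = tr(Sig0 P_{K,L})`. -/
def cost (Sig0 : Matrix (Fin d) (Fin d) ℝ) (K : Matrix (Fin m₁) (Fin d) ℝ)
    (L : Matrix (Fin m₂) (Fin d) ℝ) : ℝ :=
  (Sig0 * S.P K L).trace

/-- `E_{K,L} = (Rᵘ + Bᵀ P_{K,L} B) K - Bᵀ P_{K,L} (A - CL)`. -/
def E (K : Matrix (Fin m₁) (Fin d) ℝ) (L : Matrix (Fin m₂) (Fin d) ℝ) :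
    Matrix (Fin m₁) (Fin d) ℝ :=
  (S.Ru + (S.B)ᵀ * S.P K L * S.B) * K - (S.B)ᵀ * S.P K L * (S.A - S.C * L)

/-- `F_{K,L} = (-Rᵛ + Cᵀ P_{K,L} C) L - Cᵀ P_{K,L} (A - BK)`. -/
def F (K : Matrix (Fin m₁) (Fin d) ℝ) (L : Matrix (Fin m₂) (Fin d) ℝ) :
    Matrix (Fin m₂) (Fin d) ℝ :=
  (-S.Rv + (S.C)ᵀ * S.P K L * S.C) * L - (S.C)ᵀ * S.P K L * (S.A - S.B * K)

/-- The value function `V_{K,L}(x) = xᵀ P_{K,L} x`. -/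
def V (K : Matrix (Fin m₁) (Fin d) ℝ) (L : Matrix (Fin m₂) (Fin d) ℝ) (x : Fin d → ℝ) : ℝ :=
  x ⬝ᵥ (S.P K L *ᵥ x)

/-- The advantage function `A_{K,L}(x,u,v)`. -/
def Adv (K : Matrix (Fin m₁) (Fin d) ℝ) (L : Matrix (Fin m₂) (Fin d) ℝ)
    (x : Fin d → ℝ) (u : Fin m₁ → ℝ) (v : Fin m₂ → ℝ) : ℝ :=
  x ⬝ᵥ (S.Q *ᵥ x) + u ⬝ᵥ (S.Ru *ᵥ u) - v ⬝ᵥ (S.Rv *ᵥ v)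
    + (S.A *ᵥ x + S.B *ᵥ u + S.C *ᵥ v) ⬝ᵥ (S.P K L *ᵥ (S.A *ᵥ x + S.B *ᵥ u + S.C *ᵥ v))
    - x ⬝ᵥ (S.P K L *ᵥ x)

/-- `Ã_L = A - CL`. -/
def At (L : Matrix (Fin m₂) (Fin d) ℝ) : Matrix (Fin d) (Fin d) ℝ := S.A - S.C * L

/-- `P` satisfies the inner Riccati equation for `L`. -/
def Riccati (L : Matrix (Fin m₂) (Fin d) ℝ) (P : Matrix (Fin d) (Fin d) ℝ) : Prop :=
  P = (S.Q - Lᵀ * S.Rv * L) + (S.At L)ᵀ * P * S.At L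
      - (S.At L)ᵀ * P * S.B * (S.Ru + (S.B)ᵀ * P * S.B)⁻¹ * (S.B)ᵀ * P * S.At L

/-- `K_P(L) = (Rᵘ + BᵀPB)⁻¹ BᵀP Ã_L`. -/
def KP (L : Matrix (Fin m₂) (Fin d) ℝ) (P : Matrix (Fin d) (Fin d) ℝ) :
    Matrix (Fin m₁) (Fin d) ℝ :=
  (S.Ru + (S.B)ᵀ * P * S.B)⁻¹ * (S.B)ᵀ * P * S.At L

/-- `F_P(L) = (-Rᵛ + CᵀPC) L - CᵀP (A - B K_P(L))`. -/
def FP (L : Matrix (Fin m₂) (Fin d) ℝ) (P : Matrix (Fin d) (Fin d) ℝ) :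
    Matrix (Fin m₂) (Fin d) ℝ :=
  (-S.Rv + (S.C)ᵀ * P * S.C) * L - (S.C)ᵀ * P * (S.A - S.B * S.KP L P)

/-- `W_P(L) = Rᵛ - Cᵀ[P - PB(Rᵘ + BᵀPB)⁻¹BᵀP]C`. -/
def WP (L : Matrix (Fin m₂) (Fin d) ℝ) (P : Matrix (Fin d) (Fin d) ℝ) :
    Matrix (Fin m₂) (Fin m₂) ℝ :=
  S.Rv - (S.C)ᵀ * (P - P * S.B * (S.Ru + (S.B)ᵀ * P * S.B)⁻¹ * (S.B)ᵀ * P) * S.C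

end LQ

/-- By Gelfand's formula, the entries of the powers of a matrix of spectral radius less than one
decay geometrically. -/
lemma exists_entry_pow_le {n : ℕ} {M : Matrix (Fin n) (Fin n) ℝ} (hM : specRad M < 1) :
    ∃ q : ℝ, 0 ≤ q ∧ q < 1 ∧ ∀ᶠ t : ℕ in Filter.atTop, ∀ i j, |(M ^ t) i j| ≤ q ^ t := by
  let _ : NormedRing (Matrix (Fin n) (Fin n) ℂ) := Matrix.linftyOpNormedRing
  let _ : NormedAlgebra ℂ (Matrix (Fin n) (Fin n) ℂ) := Matrix.linftyOpNormedAlgebra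
  have : CompleteSpace (Matrix (Fin n) (Fin n) ℂ) := FiniteDimensional.complete ℂ _
  obtain ⟨r, hr, hr1⟩ := ENNReal.lt_iff_exists_nnreal_btwn.1 hM
  have hG := spectrum.pow_nnnorm_pow_one_div_tendsto_nhds_spectralRadius
    (M.map (algebraMap ℝ ℂ))
  refine ⟨r, r.2, by exact_mod_cast hr1, ?_⟩
  filter_upwards [hG.eventually_lt_const hr, Filter.eventually_gt_atTop 0] with t ht ht0 i j
  have h1 : ‖(M.map (algebraMap ℝ ℂ)) ^ t‖₊ ≤ r ^ t := by
    have h2 := ENNReal.rpow_le_rpow ht.le (Nat.cast_nonneg t : (0 : ℝ) ≤ t)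
    rw [← ENNReal.rpow_mul, one_div_mul_cancel (by positivity), ENNReal.rpow_one,
      ENNReal.rpow_natCast] at h2
    exact_mod_cast h2
  have h3 : ‖((M.map (algebraMap ℝ ℂ)) ^ t) i j‖₊ ≤ ‖(M.map (algebraMap ℝ ℂ)) ^ t‖₊ := by
    rw [Matrix.linfty_opNNNorm_def]
    exact (Finset.single_le_sum (f := fun j => ‖((M.map (algebraMap ℝ ℂ)) ^ t) i j‖₊)
      (fun _ _ => zero_le) (Finset.mem_univ j)).trans
      (Finset.le_sup (f := fun i => ∑ j, ‖((M.map (algebraMap ℝ ℂ)) ^ t) i j‖₊)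
        (Finset.mem_univ i))
  have h4 : ((M.map (algebraMap ℝ ℂ)) ^ t) i j = ((M ^ t) i j : ℂ) := by
    have := congrFun (congrFun (map_pow (algebraMap ℝ ℂ).mapMatrix M t) i) j
    simpa using this.symm
  have h5 : ‖((M ^ t) i j : ℂ)‖ ≤ (r : ℝ) ^ t := by
    rw [← h4]
    exact_mod_cast h3.trans h1
  simpa using h5

lemma summable_lyapunov {n : ℕ} {M : Matrix (Fin n) (Fin n) ℝ} (hM : specRad M < 1)
    (W : Matrix (Fin n) (Fin n) ℝ) : Summable fun t : ℕ => Mᵀ ^ t * W * M ^ t := by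
  obtain ⟨q, hq0, hq1, hq⟩ := exists_entry_pow_le hM
  refine Pi.summable.2 fun i => Pi.summable.2 fun j => ?_
  simp only [Matrix.mul_apply, ← Matrix.transpose_pow, Matrix.transpose_apply, Finset.sum_mul]
  refine summable_sum fun k _ => summable_sum fun l _ => ?_
  refine Summable.of_norm_bounded_eventually_nat (g := fun t => |W l k| * (q * q) ^ t)
    ((summable_geometric_of_lt_one (by positivity) (by nlinarith)).mul_left _) ?_
  filter_upwards [hq] with t ht
  calc ‖(M ^ t) l i * W l k * (M ^ t) k j‖
      = |W l k| * (|(M ^ t) l i| * |(M ^ t) k j|) := by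
        simp only [norm_mul, Real.norm_eq_abs]; ring
    _ ≤ |W l k| * (q ^ t * q ^ t) := by
        gcongr
        · exact ht l i
        · exact ht k j
    _ = |W l k| * (q * q) ^ t := by rw [mul_pow]

lemma lyapunov_tsum {n : ℕ} {M : Matrix (Fin n) (Fin n) ℝ} (hM : specRad M < 1)
    (W : Matrix (Fin n) (Fin n) ℝ) :
    ∑' t : ℕ, Mᵀ ^ t * W * M ^ t = W + Mᵀ * (∑' t : ℕ, Mᵀ ^ t * W * M ^ t) * M := by
  have hs := summable_lyapunov hM W
  conv_lhs => rw [hs.tsum_eq_zero_add]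
  rw [← hs.tsum_mul_left, ← (hs.mul_left _).tsum_mul_right]
  congr 1
  · simp
  · refine tsum_congr fun t => ?_
    rw [pow_succ', pow_succ]
    simp only [Matrix.mul_assoc]

/-- If `M` is stable and `D - MᵀDM` is positive semidefinite, then `D` is positive semidefinite: the quadratic form of
`D` is nonincreasing along the trajectories of `M`, which tend to `0`. -/
lemma posSemidef_of_stein {n : ℕ} {M D : Matrix (Fin n) (Fin n) ℝ} (hM : specRad M < 1)
    (hD : Dᵀ = D) (hN : (D - Mᵀ * D * M).PosSemidef) : D.PosSemidef := by
  refine .of_dotProduct_mulVec_nonneg (by simpa [Matrix.IsHermitian] using hD) fun x => ?_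
  have hanti : Antitone fun t : ℕ => x ⬝ᵥ ((Mᵀ ^ t * D * M ^ t) *ᵥ x) := by
    refine antitone_nat_of_succ_le fun t => ?_
    have h := (hN.conjTranspose_mul_mul_same (M ^ t)).dotProduct_mulVec_nonneg x
    have e : (M ^ t)ᴴ * (D - Mᵀ * D * M) * M ^ t
        = Mᵀ ^ t * D * M ^ t - Mᵀ ^ (t + 1) * D * M ^ (t + 1) := by
      rw [Matrix.conjTranspose_eq_transpose_of_trivial, Matrix.transpose_pow, pow_succ, pow_succ']
      simp only [Matrix.mul_sub, Matrix.sub_mul, Matrix.mul_assoc]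
    rw [e, Matrix.sub_mulVec, dotProduct_sub, star_trivial] at h
    linarith
  have hlim : Filter.Tendsto (fun t : ℕ => x ⬝ᵥ ((Mᵀ ^ t * D * M ^ t) *ᵥ x)) Filter.atTop
      (nhds 0) := by
    have hc : Continuous fun Y : Matrix (Fin n) (Fin n) ℝ => x ⬝ᵥ (Y *ᵥ x) := by fun_prop
    have h := (hc.tendsto 0).comp (summable_lyapunov hM D).tendsto_atTop_zero
    rwa [Matrix.zero_mulVec, dotProduct_zero] at h
  simpa using hanti.le_of_tendsto hlim 0

/-- Difference of two Lyapunov equations, with the square completed around a gain `K` that is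
stationary for `P`. -/
lemma lyapunov_sub_eq {n m : ℕ} {W G P P' : Matrix (Fin n) (Fin n) ℝ}
    {R : Matrix (Fin m) (Fin m) ℝ} {B : Matrix (Fin n) (Fin m) ℝ}
    {K K' : Matrix (Fin m) (Fin n) ℝ} (hR : Rᵀ = R) (hPs : Pᵀ = P)
    (hP : P = W + Kᵀ * R * K + (G - B * K)ᵀ * P * (G - B * K))
    (hP' : P' = W + K'ᵀ * R * K' + (G - B * K')ᵀ * P' * (G - B * K'))
    (hK : (R + Bᵀ * P * B) * K = Bᵀ * P * G) :
    (P' - P) - (G - B * K')ᵀ * (P' - P) * (G - B * K')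
      = (K' - K)ᵀ * (R + Bᵀ * P * B) * (K' - K) := by
  have hKt : Kᵀ * (R + Bᵀ * P * B) = Gᵀ * P * B := by
    have := congrArg Matrix.transpose hK
    simpa [Matrix.transpose_mul, hR, hPs, Matrix.mul_assoc] using this
  have h1 : (P' - P) - (G - B * K')ᵀ * (P' - P) * (G - B * K')
      = (W + K'ᵀ * R * K' + (G - B * K')ᵀ * P * (G - B * K'))
        - (W + Kᵀ * R * K + (G - B * K)ᵀ * P * (G - B * K)) := by
    rw [← hP]
    nth_rewrite 1 [hP']
    rw [Matrix.mul_sub (G - B * K')ᵀ P' P, Matrix.sub_mul (_ * P')]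
    abel
  -- The right-hand side of the Lyapunov equation as a quadratic polynomial in the gain `X`.
  have h2 : ∀ X : Matrix (Fin m) (Fin n) ℝ,
      W + Xᵀ * R * X + (G - B * X)ᵀ * P * (G - B * X)
        = W + Gᵀ * P * G + Xᵀ * (R + Bᵀ * P * B) * X - Xᵀ * (Bᵀ * P * G) - (Gᵀ * P * B) * X := by
    intro X
    simp only [Matrix.transpose_sub, Matrix.transpose_mul, Matrix.mul_sub, Matrix.sub_mul,
      Matrix.mul_add, Matrix.add_mul, Matrix.mul_assoc]
    abel
  rw [h1, h2, h2, ← hK, ← hKt]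
  simp only [Matrix.transpose_sub, Matrix.mul_sub, Matrix.sub_mul]
  simp only [Matrix.mul_assoc]
  abel

open scoped MatrixOrder in
lemma trace_mul_nonneg_of_posSemidef {n : ℕ} {X Y : Matrix (Fin n) (Fin n) ℝ}
    (hX : X.PosSemidef) (hY : Y.PosSemidef) : 0 ≤ (X * Y).trace := by
  obtain ⟨Z, rfl⟩ := CStarAlgebra.nonneg_iff_eq_star_mul_self.mp hX.nonneg
  rw [Matrix.mul_assoc, Matrix.trace_mul_comm]
  exact (hY.mul_mul_conjTranspose_same Z).trace_nonneg

namespace LQ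

variable {d m₁ m₂ : ℕ} (S : LQ d m₁ m₂) {K : Matrix (Fin m₁) (Fin d) ℝ}
  {L : Matrix (Fin m₂) (Fin d) ℝ}

lemma P_eq (h : S.IsStabilizing K L) :
    S.P K L = S.Q + Kᵀ * S.Ru * K - Lᵀ * S.Rv * L + (S.cl K L)ᵀ * S.P K L * S.cl K L :=
  lyapunov_tsum h _

lemma Q_transpose : S.Qᵀ = S.Q := by simpa [Matrix.IsHermitian] using S.hQ.1

lemma Ru_transpose : S.Ruᵀ = S.Ru := by simpa [Matrix.IsHermitian] using S.hRu.1

lemma Rv_transpose : S.Rvᵀ = S.Rv := by simpa [Matrix.IsHermitian] using S.hRv.1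

lemma P_transpose : (S.P K L)ᵀ = S.P K L := by
  rw [P, Matrix.transpose_tsum]
  refine tsum_congr fun t => ?_
  simp [Matrix.transpose_mul, Matrix.transpose_pow, Matrix.mul_assoc, Q_transpose, Ru_transpose,
    Rv_transpose]

/-- The cost is monotone in the value matrix for the Loewner order. -/
lemma cost_le_cost {Sig0 : Matrix (Fin d) (Fin d) ℝ} (hSig0 : Sig0.PosDef)
    {K' : Matrix (Fin m₁) (Fin d) ℝ} {L' : Matrix (Fin m₂) (Fin d) ℝ}
    (h : (S.P K' L' - S.P K L).PosSemidef) : S.cost Sig0 K L ≤ S.cost Sig0 K' L' := by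
  have := trace_mul_nonneg_of_posSemidef hSig0.posSemidef h
  rw [Matrix.mul_sub, Matrix.trace_sub] at this
  exact sub_nonneg.1 this

end LQ

open LQ in
/-- Stationary point property: if `(K,L)` is stabilizing with `P_{K,L} ≻ 0`, `E_{K,L} = 0`,
`F_{K,L} = 0` and `Rᵛ - CᵀP_{K,L}C ≻ 0`, then `(K,L)` is a Nash equilibrium among stabilizing
linear feedback policies. -/
theorem stationary_point_is_nash {d m₁ m₂ : ℕ} (S : LQ d m₁ m₂)
    (Sig0 : Matrix (Fin d) (Fin d) ℝ) (hSig0 : Sig0.PosDef)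
    (K : Matrix (Fin m₁) (Fin d) ℝ) (L : Matrix (Fin m₂) (Fin d) ℝ)
    (hKL : S.IsStabilizing K L) (hP : (S.P K L).PosDef)
    (hE : S.E K L = 0) (hF : S.F K L = 0)
    (hRv : (S.Rv - (S.C)ᵀ * S.P K L * S.C).PosDef) :
    (∀ K' : Matrix (Fin m₁) (Fin d) ℝ, S.IsStabilizing K' L →
        S.cost Sig0 K L ≤ S.cost Sig0 K' L) ∧
    (∀ L' : Matrix (Fin m₂) (Fin d) ℝ, S.IsStabilizing K L' →
        S.cost Sig0 K L' ≤ S.cost Sig0 K L) := by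
  refine ⟨fun K' hK' => S.cost_le_cost hSig0 ?_, fun L' hL' => S.cost_le_cost hSig0 ?_⟩
  · have hcl : ∀ X, S.cl X L = (S.A - S.C * L) - S.B * X := fun X => by rw [cl]; abel
    have hlyap : ∀ X, S.IsStabilizing X L → S.P X L = (S.Q - Lᵀ * S.Rv * L) + Xᵀ * S.Ru * X
        + ((S.A - S.C * L) - S.B * X)ᵀ * S.P X L * ((S.A - S.C * L) - S.B * X) := fun X hX => by
      rw [← hcl]
      refine (S.P_eq hX).trans ?_
      abel
    have hid := lyapunov_sub_eq S.Ru_transpose S.P_transpose (hlyap K hKL) (hlyap K' hK')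
      (sub_eq_zero.1 hE)
    rw [← hcl] at hid
    refine posSemidef_of_stein hK' (by simp [P_transpose]) ?_
    rw [hid]
    exact (S.hRu.posSemidef.add (hP.posSemidef.conjTranspose_mul_mul_same
      S.B)).conjTranspose_mul_mul_same (K' - K)
  · have hcl : ∀ X, S.cl K X = (S.A - S.B * K) - S.C * X := fun X => rfl
    have hlyap : ∀ X, S.IsStabilizing K X → S.P K X = (S.Q + Kᵀ * S.Ru * K) + Xᵀ * (-S.Rv) * X
        + ((S.A - S.B * K) - S.C * X)ᵀ * S.P K X * ((S.A - S.B * K) - S.C * X) := fun X hX => by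
      rw [← hcl]
      refine (S.P_eq hX).trans ?_
      rw [Matrix.mul_neg, Matrix.neg_mul]
      abel
    have hid := lyapunov_sub_eq (by simp [Rv_transpose]) S.P_transpose (hlyap L hKL) (hlyap L' hL')
      (sub_eq_zero.1 hF)
    rw [← hcl] at hid
    refine posSemidef_of_stein hL' (by simp [P_transpose]) ?_
    have hneg : (S.P K L - S.P K L') - (S.cl K L')ᵀ * (S.P K L - S.P K L') * S.cl K L'
        = (L' - L)ᵀ * (S.Rv - S.Cᵀ * S.P K L * S.C) * (L' - L) := by
      rw [← neg_sub (S.P K L') (S.P K L), Matrix.mul_neg, Matrix.neg_mul, ← neg_sub', hid,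
        ← Matrix.neg_mul, ← Matrix.mul_neg]
      congr 2
      abel
    rw [hneg]
    exact hRv.posSemidef.conjTranspose_mul_mul_same (L' - L)
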